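/- Assume M ≥ 2 and fix ε > 0. For an integer b and H ∈ 𝔥₁, call a prime q ∈ Q_H bad for b if |∑_{−Ky < n ≤ y} λ_b(H; q, n) − (K+1)y| > y/H^{1+ε}. There exist C > 0 and x₀ (depending only on δ, M, K, ξ, ε) such that for all x ≥ x₀ and every H ∈ 𝔥₁: E[∑_{n ∈ S_z(b) ∩ [1,y]} ∑_{q ∈ Q_H bad for b} ∑_{1 ≤ h ≤ KH} λ_b(H; q, n − qh)] ≤ C·y·#Q_H / H^{M−5−2ε}. -/

import Mathlib

open scoped Classical

noncomputable def yy (δ x : ℝ) : ℕ := ⌈x * Real.log x ^ δ⌉₊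

noncomputable def zz (δ x : ℝ) : ℝ :=
  (yy δ x : ℝ) * Real.log (Real.log x) ^ 2 / Real.log x ^ (1/2 : ℝ)

noncomputable def primesUpTo (t : ℝ) : Finset ℕ :=
  (Finset.range (⌊t⌋₊ + 1)).filter fun p => p.Prime ∧ (p : ℝ) ≤ t

noncomputable def PP (t : ℝ) : ℕ := ∏ p ∈ primesUpTo t, p

noncomputable def sigUpTo (t : ℝ) : ℝ := ∏ p ∈ primesUpTo t, (1 - 1 / (p : ℝ))

noncomputable def primesBetween (w t : ℝ) : Finset ℕ :=
  (Finset.range (⌊t⌋₊ + 1)).filter fun p => p.Prime ∧ w < (p : ℝ) ∧ (p : ℝ) ≤ t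

noncomputable def sigBetween (w t : ℝ) : ℝ := ∏ p ∈ primesBetween w t, (1 - 1 / (p : ℝ))

def inS (t : ℝ) (b n : ℤ) : Prop :=
  ∀ p : ℕ, p.Prime → (p : ℝ) ≤ t → ¬ ((p : ℤ) ∣ (n - b))

def inSBetween (w t : ℝ) (b n : ℤ) : Prop :=
  ∀ p : ℕ, p.Prime → w < (p : ℝ) → (p : ℝ) ≤ t → ¬ ((p : ℤ) ∣ (n - b))

noncomputable def countS (t : ℝ) (b lo hi : ℤ) : ℕ :=
  ((Finset.Icc lo hi).filter (inS t b)).card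

noncomputable def EE (δ x : ℝ) (g : ℤ → ℝ) : ℝ :=
  (1 / (PP (zz δ x) : ℝ)) * ∑ b ∈ Finset.range (PP (zz δ x)), g (b : ℤ)

def frakH (δ ξ x : ℝ) : Set ℝ :=
  {H | ∃ j : ℕ, H = ξ ^ j ∧ 2 * (yy δ x : ℝ) / x ≤ H ∧ H ≤ (yy δ x : ℝ) / (ξ * zz δ x)}

def frakH1 (δ ξ x : ℝ) : Set ℝ :=
  {H | ∃ j : ℕ, Even j ∧ H = ξ ^ j ∧ 2 * (yy δ x : ℝ) / x ≤ H ∧ H ≤ (yy δ x : ℝ) / (ξ * zz δ x)}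

def frakH2 (δ ξ x : ℝ) : Set ℝ :=
  {H | ∃ j : ℕ, Odd j ∧ H = ξ ^ j ∧ 2 * (yy δ x : ℝ) / x ≤ H ∧ H ≤ (yy δ x : ℝ) / (ξ * zz δ x)}

noncomputable def QH (δ ξ x H : ℝ) : Finset ℕ :=
  (Finset.range (⌊(yy δ x : ℝ) / H⌋₊ + 1)).filter fun q =>
    q.Prime ∧ (yy δ x : ℝ) / (ξ * H) < (q : ℝ) ∧ (q : ℝ) ≤ (yy δ x : ℝ) / H

noncomputable def Hq (δ ξ x : ℝ) (q : ℕ) : ℝ :=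
  if h : ∃ H ∈ frakH δ ξ x, (yy δ x : ℝ) / (ξ * H) < (q : ℝ) ∧ (q : ℝ) ≤ (yy δ x : ℝ) / H
  then h.choose else 1

noncomputable def APset (M : ℝ) (K : ℕ) (b : ℤ) (H : ℝ) (q : ℕ) (n : ℤ) : Finset ℤ :=
  ((Finset.Icc 1 ⌊(K : ℝ) * H⌋₊).image fun h : ℕ => n + (q : ℤ) * (h : ℤ)).filter (inS (H ^ M) b)

noncomputable def lam (M zv : ℝ) (K : ℕ) (b : ℤ) (H : ℝ) (q : ℕ) (n : ℤ) : ℝ :=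
  if ∀ m ∈ APset M K b H q n, inSBetween (H ^ M) zv b m
  then sigBetween (H ^ M) zv ^ (-((APset M K b H q n).card : ℤ))
  else 0

noncomputable def APsetStar (M : ℝ) (K : ℕ) (N b : ℤ) (H : ℝ) (q : ℕ) (n : ℤ) : Finset ℤ :=
  ((Finset.Icc 1 ⌊(K : ℝ) * H⌋₊).image fun h : ℕ => n - (q : ℤ) * (h : ℤ)).filter (inS (H ^ M) (-N - b))

noncomputable def lamStar (M zv : ℝ) (K : ℕ) (N b : ℤ) (H : ℝ) (q : ℕ) (n : ℤ) : ℝ :=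
  if ∀ m ∈ APsetStar M K N b H q n, inSBetween (H ^ M) zv (-N - b) m
  then sigBetween (H ^ M) zv ^ (-((APsetStar M K N b H q n).card : ℤ))
  else 0

theorem mem_primesUpTo {t : ℝ} {p : ℕ} : p ∈ primesUpTo t ↔ p.Prime ∧ (p : ℝ) ≤ t := by
  simp only [primesUpTo, Finset.mem_filter, Finset.mem_range, and_iff_right_iff_imp]
  rintro ⟨-, h⟩
  exact Nat.lt_succ_of_le (Nat.le_floor h)

theorem mem_primesBetween {w t : ℝ} {p : ℕ} :
    p ∈ primesBetween w t ↔ p.Prime ∧ w < (p : ℝ) ∧ (p : ℝ) ≤ t := by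
  simp only [primesBetween, Finset.mem_filter, Finset.mem_range, and_iff_right_iff_imp]
  rintro ⟨-, -, h⟩
  exact Nat.lt_succ_of_le (Nat.le_floor h)

theorem PP_eq_mul {w t : ℝ} (h : w ≤ t) : PP t = PP w * ∏ p ∈ primesBetween w t, p := by
  unfold PP
  rw [← Finset.prod_union]
  · congr 1
    ext p
    simp only [Finset.mem_union, mem_primesUpTo, mem_primesBetween]
    constructor
    · rintro ⟨hp, hpt⟩
      rcases le_or_gt (p : ℝ) w with h1 | h1
      · exact Or.inl ⟨hp, h1⟩
      · exact Or.inr ⟨hp, h1, hpt⟩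
    · rintro (⟨hp, h1⟩ | ⟨hp, _, h1⟩)
      · exact ⟨hp, h1.trans h⟩
      · exact ⟨hp, h1⟩
  · rw [Finset.disjoint_left]
    intro p h1 h2
    exact absurd (mem_primesUpTo.1 h1).2 (not_le.2 (mem_primesBetween.1 h2).2.1)

theorem PP_pos (t : ℝ) : 0 < PP t :=
  Finset.prod_pos fun _ hp => (mem_primesUpTo.1 hp).1.pos

theorem sum_inv_sq_primesBetween_le {w t : ℝ} (hw : 0 < w) :
    ∑ p ∈ primesBetween w t, 1 / (p : ℝ) ^ 2 ≤ 2 / w := by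
  have h := sum_Ioo_inv_sq_le (α := ℝ) ⌊w⌋₊ (⌊t⌋₊ + 1)
  calc ∑ p ∈ primesBetween w t, 1 / (p : ℝ) ^ 2
      ≤ ∑ p ∈ Finset.Ioo ⌊w⌋₊ (⌊t⌋₊ + 1), ((p : ℝ) ^ 2)⁻¹ := by
        simp only [one_div]
        refine Finset.sum_le_sum_of_subset_of_nonneg ?_ fun _ _ _ => by positivity
        intro p hp
        obtain ⟨-, h1, h2⟩ := mem_primesBetween.1 hp
        rw [Finset.mem_Ioo]
        exact ⟨(Nat.floor_lt hw.le).2 h1, Nat.lt_succ_of_le (Nat.le_floor h2)⟩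
    _ ≤ 2 / (⌊w⌋₊ + 1) := h
    _ ≤ 2 / w := by
        gcongr
        exact (Nat.lt_floor_add_one w).le

theorem sum_inv_dyadic_primes_le {n : ℕ} (hn : 1 ≤ n) :
    ∑ p ∈ primesBetween (2 ^ n) (2 ^ (n + 1)), 1 / (p : ℝ) ≤ 4 / n := by
  have hn' : (0 : ℝ) < n := by exact_mod_cast hn
  have hl2 : 0 < Real.log 2 := Real.log_pos one_lt_two
  have hθ : Chebyshev.theta ((2 : ℝ) ^ (n + 1)) ≤ Real.log 4 * 2 ^ (n + 1) :=
    Chebyshev.theta_le_log4_mul_x (by positivity)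
  have hsub : ∑ p ∈ primesBetween (2 ^ n) (2 ^ (n + 1)), Real.log p ≤
      Chebyshev.theta ((2 : ℝ) ^ (n + 1)) := by
    rw [Chebyshev.theta]
    refine Finset.sum_le_sum_of_subset_of_nonneg ?_ fun p hp _ => Real.log_natCast_nonneg p
    intro p hp
    obtain ⟨h0, h1, h2⟩ := mem_primesBetween.1 hp
    simp only [Finset.mem_filter, Finset.mem_Ioc]
    exact ⟨⟨h0.pos, Nat.le_floor h2⟩, h0⟩
  have hterm : ∀ p ∈ primesBetween (2 ^ n) (2 ^ (n + 1)),
      1 / (p : ℝ) ≤ Real.log p / (2 ^ n * (n * Real.log 2)) := by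
    intro p hp
    obtain ⟨h0, h1, h2⟩ := mem_primesBetween.1 hp
    have hp0 : (0 : ℝ) < p := by exact_mod_cast h0.pos
    have hlog : n * Real.log 2 ≤ Real.log p := by
      rw [← Real.log_pow]
      exact Real.log_le_log (by positivity) h1.le
    rw [div_le_div_iff₀ hp0 (by positivity), one_mul, mul_comm]
    exact mul_le_mul hlog h1.le (by positivity) (le_trans (by positivity) hlog)
  calc _ ≤ ∑ p ∈ primesBetween (2 ^ n) (2 ^ (n + 1)), Real.log p / (2 ^ n * (n * Real.log 2)) :=
        Finset.sum_le_sum hterm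
    _ ≤ Real.log 4 * 2 ^ (n + 1) / (2 ^ n * (n * Real.log 2)) := by
        rw [← Finset.sum_div]
        gcongr
        exact hsub.trans hθ
    _ = 4 / n := by
        rw [show (4 : ℝ) = 2 ^ 2 by norm_num, Real.log_pow]
        field_simp
        push_cast
        ring

theorem sum_inv_primesUpTo_two_pow_le (n : ℕ) :
    ∑ p ∈ primesUpTo (2 ^ n), 1 / (p : ℝ) ≤ 8 * (harmonic n : ℝ) := by
  have hsplit : ∀ n : ℕ, ∑ p ∈ primesUpTo (2 ^ (n + 1)), 1 / (p : ℝ) ≤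
      ∑ p ∈ primesUpTo (2 ^ n), 1 / (p : ℝ) +
        ∑ p ∈ primesBetween (2 ^ n) (2 ^ (n + 1)), 1 / (p : ℝ) := by
    intro n
    rw [← Finset.sum_union_inter]
    refine le_add_of_le_of_nonneg ?_ (Finset.sum_nonneg fun _ _ => by positivity)
    refine Finset.sum_le_sum_of_subset_of_nonneg ?_ fun _ _ _ => by positivity
    intro p hp
    obtain ⟨h0, h1⟩ := mem_primesUpTo.1 hp
    rw [Finset.mem_union, mem_primesUpTo, mem_primesBetween]
    rcases le_or_gt (p : ℝ) (2 ^ n) with h | h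
    · exact Or.inl ⟨h0, h⟩
    · exact Or.inr ⟨h0, h, h1⟩
  induction n with
  | zero =>
    rw [Finset.sum_eq_zero]
    · simp
    · intro p hp
      obtain ⟨h0, h1⟩ := mem_primesUpTo.1 hp
      have : p ≤ 1 := by exact_mod_cast (by simpa using h1 : (p : ℝ) ≤ 1)
      exact absurd h0.two_le (by omega)
  | succ n ih =>
    rw [harmonic_succ]
    push_cast
    refine (hsplit n).trans ?_
    rw [mul_add]
    refine add_le_add ih ?_
    rcases Nat.eq_zero_or_pos n with rfl | hn
    · have hsub : primesBetween (2 ^ 0) (2 ^ (0 + 1)) ⊆ {2} := by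
        intro p hp
        obtain ⟨h0, h1, h2⟩ := mem_primesBetween.1 hp
        have : p ≤ 2 := by exact_mod_cast (by simpa using h2 : (p : ℝ) ≤ 2)
        have := h0.two_le
        rw [Finset.mem_singleton]
        omega
      refine (Finset.sum_le_sum_of_subset_of_nonneg hsub fun _ _ _ => by positivity).trans ?_
      norm_num
    · refine (sum_inv_dyadic_primes_le hn).trans ?_
      have hn' : (1 : ℝ) ≤ n := by exact_mod_cast hn
      rw [← div_eq_mul_inv, div_le_div_iff₀ (by linarith) (by linarith)]
      linarith

/-- A weak form of the second theorem of Mertens. -/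
theorem sum_inv_primesUpTo_le {z L : ℝ} (hL : 1 ≤ L) (hz : Real.log z ≤ L) (hz0 : 0 < z) :
    ∑ p ∈ primesUpTo z, 1 / (p : ℝ) ≤ 8 * (1 + Real.log (3 * L)) := by
  set n : ℕ := ⌈2 * L⌉₊
  have hn : (n : ℝ) ≤ 3 * L := by
    have := (Nat.ceil_lt_add_one (a := 2 * L) (by linarith)).le
    linarith
  have hn2 : 2 * L ≤ n := Nat.le_ceil _
  have hzn : z ≤ 2 ^ n := by
    rw [← Real.log_le_log_iff hz0 (by positivity), Real.log_pow]
    have := Real.log_two_gt_d9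
    nlinarith
  have hsub : primesUpTo z ⊆ primesUpTo (2 ^ n) := by
    intro p hp
    obtain ⟨h0, h1⟩ := mem_primesUpTo.1 hp
    exact mem_primesUpTo.2 ⟨h0, h1.trans hzn⟩
  calc _ ≤ ∑ p ∈ primesUpTo (2 ^ n), 1 / (p : ℝ) :=
        Finset.sum_le_sum_of_subset_of_nonneg hsub fun _ _ _ => by positivity
    _ ≤ 8 * (harmonic n : ℝ) := sum_inv_primesUpTo_two_pow_le n
    _ ≤ 8 * (1 + Real.log n) := by gcongr; exact harmonic_le_one_add_log n
    _ ≤ _ := by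
        have : (0 : ℝ) < n := by linarith
        gcongr

theorem sum_range_mul_of_coprime {m n : ℕ} (h : m.Coprime n) (hm : 0 < m) (hn : 0 < n)
    (F : ℕ → ℕ → ℝ) (hF₁ : ∀ a c, F (a % m) c = F a c) (hF₂ : ∀ a c, F a (c % n) = F a c) :
    ∑ b ∈ Finset.range (m * n), F b b = ∑ a ∈ Finset.range m, ∑ c ∈ Finset.range n, F a c := by
  rw [← Finset.sum_product']
  refine Finset.sum_bij' (fun b _ => (b % m, b % n))
    (fun a _ => (Nat.chineseRemainder h a.1 a.2 : ℕ)) ?_ ?_ ?_ ?_ ?_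
  · intro b _
    simp [Nat.mod_lt _ hm, Nat.mod_lt _ hn]
  · intro a _
    rw [Finset.mem_range]
    exact Nat.chineseRemainder_lt_mul h _ _ hm.ne' hn.ne'
  · intro b hb
    have h1 := (Nat.chineseRemainder_modEq_unique h
      (Nat.mod_modEq b m).symm (Nat.mod_modEq b n).symm)
    have h2 := Nat.chineseRemainder_lt_mul h (b % m) (b % n) hm.ne' hn.ne'
    rw [Nat.ModEq, Nat.mod_eq_of_lt h2, Nat.mod_eq_of_lt (Finset.mem_range.1 hb)] at h1
    exact h1.symm
  · rintro ⟨a, c⟩ hac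
    rw [Finset.mem_product, Finset.mem_range, Finset.mem_range] at hac
    have h1 := (Nat.chineseRemainder h a c).2
    simp only [Prod.mk.injEq]
    exact ⟨by simpa [Nat.ModEq, Nat.mod_eq_of_lt hac.1] using h1.1,
      by simpa [Nat.ModEq, Nat.mod_eq_of_lt hac.2] using h1.2⟩
  · intro b _
    simp only [hF₁, hF₂]

theorem sum_range_prod_primes (T : Finset ℕ) (hT : ∀ p ∈ T, p.Prime) (f : ℕ → ℕ → ℝ)
    (hf : ∀ p ∈ T, ∀ a, f p (a % p) = f p a) :
    ∑ b ∈ Finset.range (∏ p ∈ T, p), ∏ p ∈ T, f p b =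
      ∏ p ∈ T, ∑ a ∈ Finset.range p, f p a := by
  induction T using Finset.induction_on with
  | empty => simp
  | insert r T hr ih =>
    rw [Finset.prod_insert hr, Finset.prod_insert hr,
      ← ih (fun p hp => hT p (Finset.mem_insert_of_mem hp))
        (fun p hp => hf p (Finset.mem_insert_of_mem hp))]
    have hcop : r.Coprime (∏ p ∈ T, p) := by
      refine Nat.Coprime.prod_right fun p hp => ?_
      rw [Nat.coprime_primes (hT r (Finset.mem_insert_self r T))
        (hT p (Finset.mem_insert_of_mem hp))]
      rintro rfl
      exact hr hp
    have key := sum_range_mul_of_coprime hcop (hT r (Finset.mem_insert_self r T)).pos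
      (Finset.prod_pos fun p hp => (hT p (Finset.mem_insert_of_mem hp)).pos)
      (fun a c => f r a * ∏ p ∈ T, f p c)
      (fun a c => by simp only [hf r (Finset.mem_insert_self r T)])
      (fun a c => by
        congr 1
        refine Finset.prod_congr rfl fun p hp => ?_
        have hp' := hf p (Finset.mem_insert_of_mem hp)
        rw [← hp' (c % _), Nat.mod_mod_of_dvd _ (Finset.dvd_prod_of_mem _ hp), hp'])
    simp only [Finset.prod_insert hr]
    rw [key, Finset.sum_mul_sum]

theorem int_dvd_sub_natCast_mod (p a : ℕ) (m : ℤ) :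
    (p : ℤ) ∣ m - ((a % p : ℕ) : ℤ) ↔ (p : ℤ) ∣ m - (a : ℤ) := by
  rw [← (ZMod.intCast_zmod_eq_zero_iff_dvd _ p), ← (ZMod.intCast_zmod_eq_zero_iff_dvd _ p)]
  push_cast
  simp

/-- The number of residues `a` mod `p` avoided by the set `A`. -/
theorem card_avoiding_residues (p : ℕ) (hp : p.Prime) (A : Finset ℤ) :
    ∑ a ∈ Finset.range p, (if ∀ m ∈ A, ¬ (p : ℤ) ∣ m - (a : ℤ) then (1 : ℝ) else 0) =
      p - ((A.image fun m : ℤ => (m : ZMod p)).card : ℝ) := by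
  have : NeZero p := ⟨hp.ne_zero⟩
  have h1 : ∑ a ∈ Finset.range p, (if ∀ m ∈ A, ¬ (p : ℤ) ∣ m - (a : ℤ) then (1 : ℝ) else 0) =
      ∑ a : ZMod p, (if a ∉ A.image (fun m : ℤ => (m : ZMod p)) then (1 : ℝ) else 0) := by
    refine Finset.sum_bij' (fun a _ => (a : ZMod p)) (fun a _ => a.val) ?_ ?_ ?_ ?_ ?_
    · simp
    · intro a _
      exact Finset.mem_range.2 (ZMod.val_lt a)
    · intro a ha
      exact ZMod.val_cast_of_lt (Finset.mem_range.1 ha)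
    · intro a _
      simp
    · intro a _
      congr 1
      rw [Finset.mem_image, eq_iff_iff]
      push Not
      refine forall₂_congr fun m _ => ?_
      rw [← ZMod.intCast_zmod_eq_zero_iff_dvd]
      push_cast
      rw [sub_eq_zero]
  rw [h1, ← Finset.sum_filter, Finset.sum_const, nsmul_eq_mul, mul_one]
  have h2 : (Finset.univ.filter fun a : ZMod p => a ∉ A.image (fun m : ℤ => (m : ZMod p))) =
      (A.image fun m : ℤ => (m : ZMod p))ᶜ := by
    ext a
    simp
  rw [h2, Finset.card_compl, ZMod.card, Nat.cast_sub]
  simpa [ZMod.card] using Finset.card_le_univ (A.image fun m : ℤ => (m : ZMod p))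

/-- The probability that a random shift of a set avoids the residue `0` modulo every prime of an
interval. -/
theorem sum_indicator_inSBetween (w z : ℝ) (A : Finset ℤ) :
    ∑ b ∈ Finset.range (∏ p ∈ primesBetween w z, p),
        (if ∀ m ∈ A, inSBetween w z (b : ℤ) m then (1 : ℝ) else 0) =
      (∏ p ∈ primesBetween w z, (p : ℝ)) *
      ∏ p ∈ primesBetween w z, (1 - ((A.image fun m : ℤ => (m : ZMod p)).card : ℝ) / p) := by
  have hT : ∀ p ∈ primesBetween w z, p.Prime := fun p hp => (mem_primesBetween.1 hp).1
  have key := sum_range_prod_primes (primesBetween w z) hT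
    (fun p a => if ∀ m ∈ A, ¬ (p : ℤ) ∣ m - (a : ℤ) then (1 : ℝ) else 0)
    (fun p _ a => by simp only [int_dvd_sub_natCast_mod])
  rw [← Finset.prod_mul_distrib]
  calc _ = ∑ b ∈ Finset.range (∏ p ∈ primesBetween w z, p), ∏ p ∈ primesBetween w z,
        (if ∀ m ∈ A, ¬ (p : ℤ) ∣ m - (b : ℤ) then (1 : ℝ) else 0) := by
        refine Finset.sum_congr rfl fun b _ => ?_
        rw [Finset.prod_boole]
        congr 1
        rw [eq_iff_iff]
        constructor
        · intro h p hp m hm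
          obtain ⟨h0, h1, h2⟩ := mem_primesBetween.1 hp
          exact h m hm p h0 h1 h2
        · intro h m hm p h0 h1 h2
          exact h p (mem_primesBetween.2 ⟨h0, h1, h2⟩) m hm
    _ = _ := by
        rw [key]
        refine Finset.prod_congr rfl fun p hp => ?_
        rw [card_avoiding_residues p (hT p hp)]
        have : (p : ℝ) ≠ 0 := by exact_mod_cast (hT p hp).ne_zero
        field_simp

theorem one_sub_sum_le_prod_one_sub {ι : Type*} (s : Finset ι) (f : ι → ℝ)
    (h0 : ∀ i ∈ s, 0 ≤ f i) (h1 : ∀ i ∈ s, f i ≤ 1) :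
    1 - ∑ i ∈ s, f i ≤ ∏ i ∈ s, (1 - f i) := by
  induction s using Finset.induction_on with
  | empty => simp
  | insert a s ha ih =>
    rw [Finset.sum_insert ha, Finset.prod_insert ha]
    have h0' : ∀ i ∈ s, 0 ≤ f i := fun i hi => h0 i (Finset.mem_insert_of_mem hi)
    have h1' : ∀ i ∈ s, f i ≤ 1 := fun i hi => h1 i (Finset.mem_insert_of_mem hi)
    have := ih h0' h1'
    have hs := Finset.sum_nonneg h0'
    have ha0 := h0 a (Finset.mem_insert_self a s)
    have ha1 := h1 a (Finset.mem_insert_self a s)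
    nlinarith

theorem sigBetween_pos (w z : ℝ) : 0 < sigBetween w z := by
  refine Finset.prod_pos fun p hp => ?_
  have h2 : (2 : ℝ) ≤ p := by exact_mod_cast (mem_primesBetween.1 hp).1.two_le
  rw [sub_pos, div_lt_one (by linarith)]
  linarith

theorem one_sub_sq_le_local_factor {p a N : ℝ} (hp : 2 ≤ p) (ha : a ≤ p) (ha0 : 0 ≤ a)
    (hN : N ≤ a) (k : ℕ) (hk : (k : ℝ) = a) :
    1 - a ^ 2 * (1 / p ^ 2) ≤ (1 - N / p) * ((1 - 1 / p) ^ k)⁻¹ := by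
  have hp0 : 0 < p := by linarith
  have h1 : 0 < 1 - 1 / p := by
    rw [sub_pos, div_lt_one hp0]
    linarith
  have h2 : 1 + a / p ≤ ((1 - 1 / p) ^ k)⁻¹ := by
    rw [le_inv_comm₀ (by positivity) (by positivity)]
    calc (1 - 1 / p) ^ k ≤ (Real.exp (-(1 / p))) ^ k := by
          gcongr
          exact Real.one_sub_le_exp_neg _
      _ = (Real.exp (a / p))⁻¹ := by
          rw [← Real.exp_nat_mul, ← Real.exp_neg, hk]
          congr 1
          ring
      _ ≤ (1 + a / p)⁻¹ := by
          gcongr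
          linarith [Real.add_one_le_exp (a / p)]
  have h3 : a / p ≤ 1 := (div_le_one hp0).2 ha
  calc 1 - a ^ 2 * (1 / p ^ 2) = (1 - a / p) * (1 + a / p) := by field_simp; ring
    _ ≤ (1 - N / p) * ((1 - 1 / p) ^ k)⁻¹ := by
        have : N / p ≤ a / p := by gcongr
        exact mul_le_mul (by linarith) h2 (by positivity) (by linarith)

theorem local_factor_le_exp {p e N : ℝ} (hp : 2 ≤ p) (k : ℕ) (hN : (k : ℝ) ≤ N + e) :
    (1 - N / p) * ((1 - 1 / p) ^ k)⁻¹ ≤ Real.exp (2 * k * (1 / p ^ 2) + e / p) := by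
  have hp0 : 0 < p := by linarith
  have h1 : 0 < 1 - 1 / p := by
    rw [sub_pos, div_lt_one hp0]
    linarith
  have h2 : (1 - 1 / p)⁻¹ ≤ Real.exp (1 / p + 2 * (1 / p ^ 2)) := by
    have h3 : (1 - 1 / p)⁻¹ ≤ 1 + (1 / p + 2 * (1 / p ^ 2)) := by
      rw [inv_le_iff_one_le_mul₀ h1]
      have : (1 + (1 / p + 2 * (1 / p ^ 2))) * (1 - 1 / p) = 1 + (p - 2) / p ^ 3 := by
        field_simp
        ring
      rw [this]
      have : 0 ≤ (p - 2) / p ^ 3 := div_nonneg (by linarith) (by positivity)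
      linarith
    refine h3.trans ?_
    rw [add_comm 1]
    exact Real.add_one_le_exp _
  calc (1 - N / p) * ((1 - 1 / p) ^ k)⁻¹
      ≤ Real.exp (-(N / p)) * (Real.exp (1 / p + 2 * (1 / p ^ 2))) ^ k := by
        rw [← inv_pow]
        refine mul_le_mul (Real.one_sub_le_exp_neg _) ?_ (by positivity) (by positivity)
        gcongr
    _ = Real.exp (2 * k * (1 / p ^ 2) + (k - N) / p) := by
        rw [← Real.exp_nat_mul, ← Real.exp_add]
        congr 1
        field_simp
        ring
    _ ≤ _ := by
        rw [Real.exp_le_exp]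
        gcongr
        linarith

theorem prod_mul_sigBetween_zpow (w z : ℝ) (f : ℕ → ℝ) (k : ℕ) :
    (∏ p ∈ primesBetween w z, f p) * sigBetween w z ^ (-(k : ℤ)) =
      ∏ p ∈ primesBetween w z, (f p * ((1 - 1 / (p : ℝ)) ^ k)⁻¹) := by
  rw [Finset.prod_mul_distrib, zpow_neg, zpow_natCast, sigBetween, Finset.prod_inv_distrib,
    Finset.prod_pow]

theorem one_sub_le_correlation {w z : ℝ} (hw : 0 < w) (A : Finset ℤ) (hA : (A.card : ℝ) ≤ w) :
    1 - 2 * (A.card : ℝ) ^ 2 / w ≤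
      (∏ p ∈ primesBetween w z, (1 - ((A.image fun m : ℤ => (m : ZMod p)).card : ℝ) / p)) *
        sigBetween w z ^ (-(A.card : ℤ)) := by
  rw [prod_mul_sigBetween_zpow]
  have hp : ∀ p ∈ primesBetween w z, (2 : ℝ) ≤ p ∧ (A.card : ℝ) ≤ p := fun p hp =>
    ⟨by exact_mod_cast (mem_primesBetween.1 hp).1.two_le,
      hA.trans (mem_primesBetween.1 hp).2.1.le⟩
  have hle : ∀ p ∈ primesBetween w z, (A.card : ℝ) ^ 2 * (1 / (p : ℝ) ^ 2) ≤ 1 := by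
    intro p h
    obtain ⟨h2, h3⟩ := hp p h
    rw [mul_one_div, div_le_one (by positivity)]
    gcongr
  calc 1 - 2 * (A.card : ℝ) ^ 2 / w
      ≤ 1 - ∑ p ∈ primesBetween w z, (A.card : ℝ) ^ 2 * (1 / (p : ℝ) ^ 2) := by
        rw [← Finset.mul_sum]
        have := mul_le_mul_of_nonneg_left (sum_inv_sq_primesBetween_le (t := z) hw)
          (sq_nonneg (A.card : ℝ))
        have h2 : (A.card : ℝ) ^ 2 * (2 / w) = 2 * (A.card : ℝ) ^ 2 / w := by ring
        linarith
    _ ≤ ∏ p ∈ primesBetween w z, (1 - (A.card : ℝ) ^ 2 * (1 / (p : ℝ) ^ 2)) :=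
        one_sub_sum_le_prod_one_sub _ _ (fun _ _ => by positivity) hle
    _ ≤ _ := by
        refine Finset.prod_le_prod (fun p h => by linarith [hle p h]) fun p h => ?_
        exact one_sub_sq_le_local_factor (hp p h).1 (hp p h).2 (by positivity)
          (by exact_mod_cast Finset.card_image_le) _ rfl

theorem correlation_le_exp {w z : ℝ} (hw : 0 < w) (A : Finset ℤ) (k : ℕ) (e : ℕ → ℝ)
    (he : ∀ p ∈ primesBetween w z,
      (k : ℝ) ≤ ((A.image fun m : ℤ => (m : ZMod p)).card : ℝ) + e p) :
    (∏ p ∈ primesBetween w z, (1 - ((A.image fun m : ℤ => (m : ZMod p)).card : ℝ) / p)) *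
        sigBetween w z ^ (-(k : ℤ)) ≤
      Real.exp (4 * k / w + ∑ p ∈ primesBetween w z, e p / p) := by
  rw [prod_mul_sigBetween_zpow]
  calc _ ≤ ∏ p ∈ primesBetween w z, Real.exp (2 * k * (1 / (p : ℝ) ^ 2) + e p / p) := by
        refine Finset.prod_le_prod (fun p h => ?_) fun p h => ?_
        · have hpr := (mem_primesBetween.1 h).1
          have : NeZero p := ⟨hpr.ne_zero⟩
          have h2 : (2 : ℝ) ≤ p := by exact_mod_cast hpr.two_le
          have h3 : ((A.image fun m : ℤ => (m : ZMod p)).card : ℝ) ≤ p := by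
            have := Finset.card_le_univ (A.image fun m : ℤ => (m : ZMod p))
            rw [ZMod.card] at this
            exact_mod_cast this
          have h4 : 1 / (p : ℝ) ≤ 1 := by
            rw [div_le_one (by linarith)]
            linarith
          have h5 : ((A.image fun m : ℤ => (m : ZMod p)).card : ℝ) / p ≤ 1 :=
            (div_le_one (by linarith)).2 h3
          exact mul_nonneg (by linarith) (inv_nonneg.2 (pow_nonneg (by linarith) _))
        · exact local_factor_le_exp
            (by exact_mod_cast (mem_primesBetween.1 h).1.two_le) _ (he p h)
    _ = Real.exp (2 * k * ∑ p ∈ primesBetween w z, 1 / (p : ℝ) ^ 2 +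
          ∑ p ∈ primesBetween w z, e p / p) := by
        rw [← Real.exp_sum, Finset.sum_add_distrib, Finset.mul_sum]
    _ ≤ _ := by
        rw [Real.exp_le_exp]
        have := mul_le_mul_of_nonneg_left (sum_inv_sq_primesBetween_le (t := z) hw)
          (by positivity : (0 : ℝ) ≤ 2 * k)
        have h2 : 2 * (k : ℝ) * (2 / w) = 4 * k / w := by ring
        linarith

/-- The weight `lam` with the part of the shift seen by the small primes and the part seen by the
large primes made independent. -/
noncomputable def lamPair (M zv : ℝ) (K : ℕ) (a c : ℤ) (H : ℝ) (q : ℕ) (n : ℤ) : ℝ :=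
  if ∀ m ∈ APset M K a H q n, inSBetween (H ^ M) zv c m
  then sigBetween (H ^ M) zv ^ (-((APset M K a H q n).card : ℤ))
  else 0

theorem lamPair_self (M zv : ℝ) (K : ℕ) (b : ℤ) (H : ℝ) (q : ℕ) (n : ℤ) :
    lamPair M zv K b b H q n = lam M zv K b H q n := rfl

theorem lam_nonneg (M zv : ℝ) (K : ℕ) (b : ℤ) (H : ℝ) (q : ℕ) (n : ℤ) :
    0 ≤ lam M zv K b H q n := by
  unfold lam
  split_ifs
  · exact zpow_nonneg (sigBetween_pos _ _).le _
  · exact le_rfl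

theorem inS_natCast_mod (t : ℝ) (a : ℕ) (n : ℤ) :
    inS t ((a % PP t : ℕ) : ℤ) n ↔ inS t (a : ℤ) n := by
  unfold inS
  refine forall₃_congr fun p hp hpt => not_congr ?_
  have hdvd : p ∣ PP t := Finset.dvd_prod_of_mem _ (mem_primesUpTo.2 ⟨hp, hpt⟩)
  rw [← int_dvd_sub_natCast_mod p (a % PP t), Nat.mod_mod_of_dvd _ hdvd,
    int_dvd_sub_natCast_mod]

theorem inSBetween_natCast_mod (w t : ℝ) (a : ℕ) (n : ℤ) :
    inSBetween w t ((a % ∏ p ∈ primesBetween w t, p : ℕ) : ℤ) n ↔ inSBetween w t (a : ℤ) n := by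
  unfold inSBetween
  refine forall₄_congr fun p hp hpw hpt => not_congr ?_
  have hdvd : p ∣ ∏ p ∈ primesBetween w t, p :=
    Finset.dvd_prod_of_mem _ (mem_primesBetween.2 ⟨hp, hpw, hpt⟩)
  rw [← int_dvd_sub_natCast_mod p (a % _), Nat.mod_mod_of_dvd _ hdvd, int_dvd_sub_natCast_mod]

theorem lamPair_mod_left (M zv : ℝ) (K : ℕ) (a : ℕ) (c : ℤ) (H : ℝ) (q : ℕ) (n : ℤ) :
    lamPair M zv K ((a % PP (H ^ M) : ℕ) : ℤ) c H q n = lamPair M zv K a c H q n := by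
  have : APset M K ((a % PP (H ^ M) : ℕ) : ℤ) H q n = APset M K a H q n := by
    unfold APset
    exact Finset.filter_congr fun m _ => inS_natCast_mod _ _ _
  unfold lamPair
  rw [this]

theorem lamPair_mod_right (M zv : ℝ) (K : ℕ) (a : ℤ) (c : ℕ) (H : ℝ) (q : ℕ) (n : ℤ) :
    lamPair M zv K a ((c % ∏ p ∈ primesBetween (H ^ M) zv, p : ℕ) : ℤ) H q n =
      lamPair M zv K a c H q n := by
  unfold lamPair
  simp only [inSBetween_natCast_mod]

theorem card_APset_le (M : ℝ) (K : ℕ) (b : ℤ) (H : ℝ) (q : ℕ) (n : ℤ) :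
    (APset M K b H q n).card ≤ ⌊(K : ℝ) * H⌋₊ := by
  unfold APset
  refine (Finset.card_filter_le _ _).trans (Finset.card_image_le.trans ?_)
  simp

theorem exists_of_mem_APset {M : ℝ} {K : ℕ} {b : ℤ} {H : ℝ} {q : ℕ} {n m : ℤ}
    (h : m ∈ APset M K b H q n) :
    ∃ j : ℤ, 1 ≤ j ∧ j ≤ (⌊(K : ℝ) * H⌋₊ : ℤ) ∧ m = n + q * j := by
  simp only [APset, Finset.mem_filter, Finset.mem_image, Finset.mem_Icc] at h
  obtain ⟨⟨j, ⟨h1, h2⟩, rfl⟩, -⟩ := h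
  exact ⟨j, by exact_mod_cast h1, by exact_mod_cast h2, rfl⟩

theorem card_image_APset {M : ℝ} {K : ℕ} {b : ℤ} {H : ℝ} {q : ℕ} {n : ℤ} {p : ℕ} (hp : p.Prime)
    (hpq : ¬ p ∣ q) (hkp : ⌊(K : ℝ) * H⌋₊ ≤ p) :
    ((APset M K b H q n).image fun m : ℤ => (m : ZMod p)).card = (APset M K b H q n).card := by
  refine Finset.card_image_of_injOn ?_
  intro m hm m' hm' h
  obtain ⟨i, hi1, hi2, rfl⟩ := exists_of_mem_APset (Finset.mem_coe.1 hm)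
  obtain ⟨j, hj1, hj2, rfl⟩ := exists_of_mem_APset (Finset.mem_coe.1 hm')
  have h1 : (p : ℤ) ∣ q * (i - j) := by
    rw [← ZMod.intCast_zmod_eq_zero_iff_dvd]
    simp only [Int.cast_add, Int.cast_mul, add_right_inj] at h
    push_cast
    rw [mul_sub, sub_eq_zero]
    exact_mod_cast h
  have h2 : (p : ℤ) ∣ i - j := by
    rcases (Nat.prime_iff_prime_int.1 hp).dvd_or_dvd h1 with h3 | h3
    · exact absurd (Int.natCast_dvd_natCast.1 h3) hpq
    · exact h3
  have h3 : i - j = 0 := by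
    refine Int.eq_zero_of_abs_lt_dvd h2 ?_
    have : (⌊(K : ℝ) * H⌋₊ : ℤ) ≤ p := by exact_mod_cast hkp
    rw [abs_lt]
    constructor <;> omega
  rw [sub_eq_zero.1 h3]

theorem card_add_card_le_card_image {M : ℝ} {K : ℕ} {b : ℤ} {H : ℝ} {q : ℕ} (n₁ n₂ : ℤ) {p : ℕ}
    (hp : p.Prime) (hpq : ¬ p ∣ q) (hkp : ⌊(K : ℝ) * H⌋₊ ≤ p) :
    (((APset M K b H q n₁).card + (APset M K b H q n₂).card : ℕ) : ℝ) ≤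
      (((APset M K b H q n₁ ∪ APset M K b H q n₂).image fun m : ℤ => (m : ZMod p)).card : ℝ) +
      (⌊(K : ℝ) * H⌋₊ : ℝ) *
        ∑ l ∈ Finset.Icc (-(⌊(K : ℝ) * H⌋₊ : ℤ)) ⌊(K : ℝ) * H⌋₊,
          if (p : ℤ) ∣ n₁ - n₂ + q * l then (1 : ℝ) else 0 := by
  set k := ⌊(K : ℝ) * H⌋₊
  rw [Finset.image_union]
  set U₁ := (APset M K b H q n₁).image fun m : ℤ => (m : ZMod p) with hU₁
  set U₂ := (APset M K b H q n₂).image fun m : ℤ => (m : ZMod p) with hU₂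
  have h1 : U₁.card = (APset M K b H q n₁).card := card_image_APset hp hpq hkp
  have h2 : U₂.card = (APset M K b H q n₂).card := card_image_APset hp hpq hkp
  rw [← h1, ← h2]
  have hnn : ∀ l ∈ Finset.Icc (-(k : ℤ)) k,
      (0 : ℝ) ≤ if (p : ℤ) ∣ n₁ - n₂ + q * l then (1 : ℝ) else 0 := by
    intro l _
    split_ifs <;> norm_num
  by_cases hdis : Disjoint U₁ U₂
  · rw [Finset.card_union_of_disjoint hdis]
    exact le_add_of_nonneg_right (mul_nonneg (by positivity) (Finset.sum_nonneg hnn))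
  · rw [Finset.not_disjoint_iff] at hdis
    obtain ⟨a, ha1, ha2⟩ := hdis
    rw [hU₁, Finset.mem_image] at ha1
    rw [hU₂, Finset.mem_image] at ha2
    obtain ⟨m, hm, rfl⟩ := ha1
    obtain ⟨m', hm', hmm⟩ := ha2
    obtain ⟨i, hi1, hi2, rfl⟩ := exists_of_mem_APset hm
    obtain ⟨j, hj1, hj2, rfl⟩ := exists_of_mem_APset hm'
    have hdvd : (p : ℤ) ∣ n₁ - n₂ + q * (i - j) := by
      rw [← ZMod.intCast_zmod_eq_zero_iff_dvd]
      push_cast at hmm ⊢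
      linear_combination -hmm
    have hmem : i - j ∈ Finset.Icc (-(k : ℤ)) k := by
      rw [Finset.mem_Icc]
      constructor <;> omega
    have hone := Finset.single_le_sum hnn hmem
    rw [if_pos hdvd] at hone
    have hU : (U₁.card : ℝ) ≤ (U₁ ∪ U₂).card := by
      exact_mod_cast Finset.card_le_card Finset.subset_union_left
    have hk : (U₂.card : ℝ) ≤ k := by
      rw [h2]
      exact_mod_cast card_APset_le M K b H q n₂
    have : (k : ℝ) * 1 ≤ k * ∑ l ∈ Finset.Icc (-(k : ℤ)) k,
        (if (p : ℤ) ∣ n₁ - n₂ + q * l then (1 : ℝ) else 0) := by gcongr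
    push_cast
    linarith

/-- The sum over the admissible large primes `p` with `p ∣ m` of `1 / p`. -/
noncomputable def dvdWeight (w z : ℝ) (m : ℤ) : ℝ :=
  ∑ p ∈ primesBetween w z, if (p : ℤ) ∣ m then 1 / (p : ℝ) else 0

theorem le_sum_lamPair {M z : ℝ} {K : ℕ} {H : ℝ} (a : ℤ) (q : ℕ) (n : ℤ) (hw : 0 < H ^ M)
    (hk : (⌊(K : ℝ) * H⌋₊ : ℝ) ≤ H ^ M) :
    ((∏ p ∈ primesBetween (H ^ M) z, p : ℕ) : ℝ) *
        (1 - 2 * (⌊(K : ℝ) * H⌋₊ : ℝ) ^ 2 / H ^ M) ≤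
      ∑ c ∈ Finset.range (∏ p ∈ primesBetween (H ^ M) z, p), lamPair M z K a c H q n := by
  have hcard : ((APset M K a H q n).card : ℝ) ≤ ⌊(K : ℝ) * H⌋₊ := by
    exact_mod_cast card_APset_le M K a H q n
  have h := one_sub_le_correlation (z := z) hw (APset M K a H q n) (hcard.trans hk)
  have hsum : ∑ c ∈ Finset.range (∏ p ∈ primesBetween (H ^ M) z, p),
      lamPair M z K a c H q n = (∑ c ∈ Finset.range (∏ p ∈ primesBetween (H ^ M) z, p),
        (if ∀ m ∈ APset M K a H q n, inSBetween (H ^ M) z (c : ℤ) m then (1 : ℝ) else 0)) *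
          sigBetween (H ^ M) z ^ (-((APset M K a H q n).card : ℤ)) := by
    rw [Finset.sum_mul]
    refine Finset.sum_congr rfl fun c _ => ?_
    rw [ite_mul, one_mul, zero_mul]
    rfl
  rw [hsum, sum_indicator_inSBetween, mul_assoc, Nat.cast_prod]
  refine mul_le_mul_of_nonneg_left (le_trans ?_ h) (by positivity)
  gcongr

theorem sum_lamPair_mul_le {M z : ℝ} {K : ℕ} {H : ℝ} (a : ℤ) (q : ℕ) (n₁ n₂ : ℤ)
    (hw : 0 < H ^ M) (hk : (⌊(K : ℝ) * H⌋₊ : ℝ) ≤ H ^ M)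
    (hq : ∀ p ∈ primesBetween (H ^ M) z, ¬ p ∣ q) :
    ∑ c ∈ Finset.range (∏ p ∈ primesBetween (H ^ M) z, p),
        lamPair M z K a c H q n₁ * lamPair M z K a c H q n₂ ≤
      ((∏ p ∈ primesBetween (H ^ M) z, p : ℕ) : ℝ) *
        Real.exp (8 * (⌊(K : ℝ) * H⌋₊ : ℝ) / H ^ M + (⌊(K : ℝ) * H⌋₊ : ℝ) *
          ∑ l ∈ Finset.Icc (-(⌊(K : ℝ) * H⌋₊ : ℤ)) ⌊(K : ℝ) * H⌋₊,
            dvdWeight (H ^ M) z (n₁ - n₂ + q * l)) := by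
  set k := ⌊(K : ℝ) * H⌋₊ with hkdef
  set A₁ := APset M K a H q n₁ with hA₁
  set A₂ := APset M K a H q n₂ with hA₂
  have h := correlation_le_exp (z := z) hw (A₁ ∪ A₂) (A₁.card + A₂.card)
    (fun p => k * ∑ l ∈ Finset.Icc (-(k : ℤ)) k,
      if (p : ℤ) ∣ n₁ - n₂ + q * l then (1 : ℝ) else 0) (fun p hp => by
        obtain ⟨h0, h1, -⟩ := mem_primesBetween.1 hp
        exact card_add_card_le_card_image n₁ n₂ h0 (hq p hp)
          (by exact_mod_cast hk.trans h1.le))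
  have hsum : ∑ c ∈ Finset.range (∏ p ∈ primesBetween (H ^ M) z, p),
      lamPair M z K a c H q n₁ * lamPair M z K a c H q n₂ =
      (∑ c ∈ Finset.range (∏ p ∈ primesBetween (H ^ M) z, p),
        (if ∀ m ∈ A₁ ∪ A₂, inSBetween (H ^ M) z (c : ℤ) m then (1 : ℝ) else 0)) *
          sigBetween (H ^ M) z ^ (-((A₁.card + A₂.card : ℕ) : ℤ)) := by
    rw [Finset.sum_mul]
    refine Finset.sum_congr rfl fun c _ => ?_
    rw [Nat.cast_add, neg_add, zpow_add₀ (sigBetween_pos _ _).ne']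
    simp only [Finset.forall_mem_union, lamPair, ← hA₁, ← hA₂, ite_and]
    split_ifs <;> simp
  rw [hsum, sum_indicator_inSBetween, mul_assoc, Nat.cast_prod]
  refine mul_le_mul_of_nonneg_left (h.trans ?_) (by positivity)
  rw [Real.exp_le_exp]
  have hc : ((A₁.card + A₂.card : ℕ) : ℝ) ≤ 2 * k := by
    have h1 := card_APset_le M K a H q n₁
    have h2 := card_APset_le M K a H q n₂
    rw [← hA₁, ← hkdef] at h1
    rw [← hA₂, ← hkdef] at h2
    exact_mod_cast (by omega : A₁.card + A₂.card ≤ 2 * k)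
  refine add_le_add ?_ (le_of_eq ?_)
  · rw [div_le_div_iff_of_pos_right hw]
    linarith
  · simp only [dvdWeight]
    rw [Finset.sum_comm, Finset.mul_sum]
    refine Finset.sum_congr rfl fun p _ => ?_
    rw [mul_div_assoc, Finset.sum_div]
    congr 1
    refine Finset.sum_congr rfl fun l _ => ?_
    rw [ite_div, zero_div]

theorem coprime_PP_prod (w z : ℝ) : (PP w).Coprime (∏ p ∈ primesBetween w z, p) := by
  refine Nat.Coprime.prod_left fun p hp => Nat.Coprime.prod_right fun r hr => ?_
  obtain ⟨hp0, hp1⟩ := mem_primesUpTo.1 hp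
  obtain ⟨hr0, hr1, -⟩ := mem_primesBetween.1 hr
  rw [Nat.coprime_primes hp0 hr0]
  rintro rfl
  linarith

theorem prod_primesBetween_pos (w z : ℝ) : 0 < ∏ p ∈ primesBetween w z, p :=
  Finset.prod_pos fun _ hp => (mem_primesBetween.1 hp).1.pos

theorem le_sum_lam {M z : ℝ} {K : ℕ} {H : ℝ} (q : ℕ) (n : ℤ) (hw : 0 < H ^ M) (hwz : H ^ M ≤ z)
    (hk : (⌊(K : ℝ) * H⌋₊ : ℝ) ≤ H ^ M) :
    (PP z : ℝ) * (1 - 2 * (⌊(K : ℝ) * H⌋₊ : ℝ) ^ 2 / H ^ M) ≤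
      ∑ b ∈ Finset.range (PP z), lam M z K b H q n := by
  have key := sum_range_mul_of_coprime (coprime_PP_prod (H ^ M) z) (PP_pos _)
    (prod_primesBetween_pos _ _) (fun a c => lamPair M z K a c H q n)
    (fun a c => lamPair_mod_left M z K a c H q n) (fun a c => lamPair_mod_right M z K a c H q n)
  simp only [lamPair_self] at key
  rw [PP_eq_mul hwz, key, Nat.cast_mul, mul_assoc]
  calc _ = ∑ _a ∈ Finset.range (PP (H ^ M)), ((∏ p ∈ primesBetween (H ^ M) z, p : ℕ) : ℝ) *
        (1 - 2 * (⌊(K : ℝ) * H⌋₊ : ℝ) ^ 2 / H ^ M) := by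
        rw [Finset.sum_const, Finset.card_range, nsmul_eq_mul]
    _ ≤ _ := Finset.sum_le_sum fun a _ => le_sum_lamPair a q n hw hk

theorem sum_lam_mul_le {M z : ℝ} {K : ℕ} {H : ℝ} (q : ℕ) (n₁ n₂ : ℤ)
    (hw : 0 < H ^ M) (hwz : H ^ M ≤ z) (hk : (⌊(K : ℝ) * H⌋₊ : ℝ) ≤ H ^ M)
    (hq : ∀ p ∈ primesBetween (H ^ M) z, ¬ p ∣ q) :
    ∑ b ∈ Finset.range (PP z), lam M z K b H q n₁ * lam M z K b H q n₂ ≤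
      (PP z : ℝ) *
        Real.exp (8 * (⌊(K : ℝ) * H⌋₊ : ℝ) / H ^ M + (⌊(K : ℝ) * H⌋₊ : ℝ) *
          ∑ l ∈ Finset.Icc (-(⌊(K : ℝ) * H⌋₊ : ℤ)) ⌊(K : ℝ) * H⌋₊,
            dvdWeight (H ^ M) z (n₁ - n₂ + q * l)) := by
  have key := sum_range_mul_of_coprime (coprime_PP_prod (H ^ M) z) (PP_pos _)
    (prod_primesBetween_pos _ _)
    (fun a c => lamPair M z K a c H q n₁ * lamPair M z K a c H q n₂)
    (fun a c => by simp only [lamPair_mod_left]) (fun a c => by simp only [lamPair_mod_right])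
  simp only [lamPair_self] at key
  rw [PP_eq_mul hwz, key, Nat.cast_mul, mul_assoc]
  refine (Finset.sum_le_sum fun (a : ℕ) _ => sum_lamPair_mul_le (a : ℤ) q n₁ n₂ hw hk hq).trans ?_
  rw [Finset.sum_const, Finset.card_range, nsmul_eq_mul]

theorem card_filter_dvd_sub_le {d : ℕ} (hd : 0 < d) (u v c : ℤ) :
    (((Finset.Ioc u v).filter fun n => (d : ℤ) ∣ n - c).card : ℝ) ≤
      ((Finset.Ioc u v).card : ℝ) / d + 1 := by
  have hd' : (0 : ℤ) < d := by exact_mod_cast hd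
  have hfil : ((Finset.Ioc u v).filter fun n => (d : ℤ) ∣ n - c) =
      (Finset.Ioc u v).filter fun n => n ≡ c [ZMOD d] := by
    refine Finset.filter_congr fun n _ => ?_
    rw [Int.modEq_comm, Int.modEq_iff_dvd]
  have h := Int.Ioc_filter_modEq_card u v hd' c
  rw [← hfil] at h
  rcases le_or_gt v u with huv | huv
  · rw [Finset.Ioc_eq_empty (not_lt.2 huv)]
    simp
  have hcard : ((Finset.Ioc u v).card : ℝ) = v - u := by
    rw [Int.card_Ioc]
    have : ((v - u).toNat : ℤ) = v - u := Int.toNat_of_nonneg (by omega)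
    exact_mod_cast this
  have hdq : (0 : ℚ) < d := by exact_mod_cast hd
  have hq : (((Finset.Ioc u v).filter fun n => (d : ℤ) ∣ n - c).card : ℚ) ≤
      ((v : ℚ) - u) / d + 1 := by
    have h' : (((Finset.Ioc u v).filter fun n => (d : ℤ) ∣ n - c).card : ℚ) =
        max (((⌊((v - c : ℤ) : ℚ) / d⌋ - ⌊((u - c : ℤ) : ℚ) / d⌋ : ℤ)) : ℚ) 0 := by
      exact_mod_cast h
    rw [h']
    have h1 := Int.floor_le (((v - c : ℤ) : ℚ) / d)
    have h2 := (Int.lt_floor_add_one (((u - c : ℤ) : ℚ) / d)).le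
    have huv' : (0 : ℚ) ≤ v - u := by
      rw [sub_nonneg]
      exact_mod_cast huv.le
    have h3 : 0 ≤ ((v : ℚ) - u) / d := by positivity
    refine max_le ?_ (by linarith)
    have h4 : ((v - c : ℤ) : ℚ) / d - ((u - c : ℤ) : ℚ) / d = ((v : ℚ) - u) / d := by
      push_cast
      ring
    push_cast at h1 h2 h4 ⊢
    linarith
  rw [hcard]
  have := (Rat.cast_le (K := ℝ)).2 hq
  push_cast at this
  exact this

theorem sum_prod_dvd_le (T : Finset ℕ) (hT : ∀ p ∈ T, p.Prime) {A : ℝ} (hA : 0 ≤ A)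
    (u v c : ℤ) :
    ∑ n ∈ Finset.Ioc u v, ∏ p ∈ T, (1 + if (p : ℤ) ∣ n - c then A / p else 0) ≤
      ((Finset.Ioc u v).card : ℝ) * ∏ p ∈ T, (1 + A * (1 / (p : ℝ) ^ 2)) +
        ∏ p ∈ T, (1 + A * (1 / (p : ℝ))) := by
  have hprod : ∀ D ⊆ T, ∀ n : ℤ, ∏ p ∈ D, (if (p : ℤ) ∣ n - c then A / (p : ℝ) else 0) =
      if ((∏ p ∈ D, p : ℕ) : ℤ) ∣ n - c then ∏ p ∈ D, (A / (p : ℝ)) else 0 := by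
    intro D hD n
    split_ifs with h
    · refine Finset.prod_congr rfl fun p hp => if_pos (dvd_trans ?_ h)
      exact Int.natCast_dvd_natCast.2 (Finset.dvd_prod_of_mem _ hp)
    · by_contra hne
      apply h
      rw [Nat.cast_prod]
      refine Finset.prod_dvd_of_coprime ?_ fun p hp => ?_
      · intro p hp r hr hpr
        refine Nat.isCoprime_iff_coprime.2 ?_
        exact (Nat.coprime_primes (hT p (hD hp)) (hT r (hD hr))).2 hpr
      · by_contra hnd
        exact hne (Finset.prod_eq_zero hp (if_neg hnd))
  simp only [Finset.prod_one_add]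
  rw [Finset.sum_comm, Finset.mul_sum, ← Finset.sum_add_distrib]
  refine Finset.sum_le_sum fun D hD => ?_
  rw [Finset.mem_powerset] at hD
  simp only [hprod D hD]
  rw [← Finset.sum_filter, Finset.sum_const, nsmul_eq_mul]
  have hd : 0 < ∏ p ∈ D, p := Finset.prod_pos fun p hp => (hT p (hD hp)).pos
  refine (mul_le_mul_of_nonneg_right (card_filter_dvd_sub_le hd u v c)
    (Finset.prod_nonneg fun p _ => by positivity)).trans (le_of_eq ?_)
  rw [add_mul, one_mul, div_mul_eq_mul_div, mul_div_assoc, Nat.cast_prod, ← Finset.prod_div_distrib]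
  congr 2
  · refine Finset.prod_congr rfl fun p _ => ?_
    ring
  · funext p
    ring

theorem exp_mul_dvdWeight_le {w z B : ℝ} (hw : 0 < w) (hB : 0 ≤ B) (m : ℤ) :
    Real.exp (B * dvdWeight w z m) ≤
      ∏ p ∈ primesBetween w z,
        (1 + if (p : ℤ) ∣ m then (B * Real.exp (B / w)) / (p : ℝ) else 0) := by
  rw [dvdWeight, Finset.mul_sum, Real.exp_sum]
  refine Finset.prod_le_prod (fun _ _ => by positivity) fun p hp => ?_
  split_ifs
  · obtain ⟨h0, h1, -⟩ := mem_primesBetween.1 hp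
    have hp0 : (0 : ℝ) < p := by exact_mod_cast h0.pos
    set t := B * (1 / (p : ℝ)) with ht
    have ht0 : 0 ≤ t := by positivity
    have ht1 : t ≤ B / w := by
      rw [ht, mul_one_div]
      gcongr
    have h2 : Real.exp t ≤ 1 + t * Real.exp t := by
      have h3 := mul_le_mul_of_nonneg_right (Real.one_sub_le_exp_neg t) (Real.exp_pos t).le
      rw [← Real.exp_add, neg_add_cancel, Real.exp_zero] at h3
      linarith
    have h4 : t * Real.exp t ≤ t * Real.exp (B / w) := by gcongr
    have h5 : t * Real.exp (B / w) = B * Real.exp (B / w) / p := by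
      rw [ht]
      ring
    linarith
  · simp

theorem sum_exp_mul_dvdWeight_le {w z B : ℝ} (hw : 0 < w) (hB : 0 ≤ B) (u v c : ℤ) :
    ∑ n ∈ Finset.Ioc u v, Real.exp (B * dvdWeight w z (n - c)) ≤
      ((Finset.Ioc u v).card : ℝ) * Real.exp (B * Real.exp (B / w) * (2 / w)) +
        Real.exp (B * Real.exp (B / w) * ∑ p ∈ primesBetween w z, 1 / (p : ℝ)) := by
  set A := B * Real.exp (B / w) with hA
  have hA0 : 0 ≤ A := by positivity
  have hexp : ∀ f : ℕ → ℝ, (∀ p, 0 ≤ f p) → ∏ p ∈ primesBetween w z, (1 + A * f p) ≤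
      Real.exp (A * ∑ p ∈ primesBetween w z, f p) := by
    intro f hf
    rw [Finset.mul_sum, Real.exp_sum]
    refine Finset.prod_le_prod (fun p _ => ?_) fun p _ => ?_
    · have := mul_nonneg hA0 (hf p)
      linarith
    · rw [add_comm]
      exact Real.add_one_le_exp _
  calc _ ≤ ∑ n ∈ Finset.Ioc u v, ∏ p ∈ primesBetween w z,
        (1 + if (p : ℤ) ∣ n - c then A / (p : ℝ) else 0) :=
        Finset.sum_le_sum fun n _ => exp_mul_dvdWeight_le hw hB _
    _ ≤ _ := sum_prod_dvd_le _ (fun p hp => (mem_primesBetween.1 hp).1) hA0 u v c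
    _ ≤ _ := by
        refine add_le_add ?_ (hexp _ fun p => by positivity)
        refine mul_le_mul_of_nonneg_left ((hexp _ fun p => by positivity).trans ?_) (by positivity)
        rw [Real.exp_le_exp]
        exact mul_le_mul_of_nonneg_left (sum_inv_sq_primesBetween_le hw) hA0

theorem exp_mul_sum_le {ι : Type*} (s : Finset ι) (hs : s.Nonempty) (k : ℝ) (f : ι → ℝ) :
    Real.exp (k * ∑ i ∈ s, f i) ≤
      (1 / (s.card : ℝ)) * ∑ i ∈ s, Real.exp ((s.card : ℝ) * k * f i) := by
  have hc : (0 : ℝ) < s.card := by exact_mod_cast hs.card_pos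
  have h := convexOn_exp.map_sum_le (t := s) (w := fun _ => 1 / (s.card : ℝ))
    (p := fun i => (s.card : ℝ) * k * f i) (fun _ _ => by positivity)
    (by rw [Finset.sum_const, nsmul_eq_mul]; field_simp) (fun _ _ => Set.mem_univ _)
  simp only [smul_eq_mul] at h
  rw [Finset.mul_sum, Finset.mul_sum]
  refine le_of_eq_of_le (congrArg Real.exp ?_) h
  refine Finset.sum_congr rfl fun i _ => ?_
  field_simp

theorem sum_sum_exp_dvdWeight_le {w z : ℝ} (hw : 0 < w) (k q : ℕ) (u v : ℤ) :
    ∑ n₁ ∈ Finset.Ioc u v, ∑ n₂ ∈ Finset.Ioc u v, Real.exp ((k : ℝ) *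
        ∑ l ∈ Finset.Icc (-(k : ℤ)) k, dvdWeight w z (n₁ - n₂ + q * l)) ≤
      ((Finset.Ioc u v).card : ℝ) * (((Finset.Ioc u v).card : ℝ) *
        Real.exp ((2 * k + 1) * k * Real.exp ((2 * k + 1) * k / w) * (2 / w)) +
        Real.exp ((2 * k + 1) * k * Real.exp ((2 * k + 1) * k / w) *
          ∑ p ∈ primesBetween w z, 1 / (p : ℝ))) := by
  set R := ((Finset.Ioc u v).card : ℝ) *
        Real.exp ((2 * k + 1) * k * Real.exp ((2 * k + 1) * k / w) * (2 / w)) +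
        Real.exp ((2 * k + 1) * k * Real.exp ((2 * k + 1) * k / w) *
          ∑ p ∈ primesBetween w z, 1 / (p : ℝ)) with hR
  have hne : (Finset.Icc (-(k : ℤ)) k).Nonempty := ⟨0, by simp⟩
  have hcard : ((Finset.Icc (-(k : ℤ)) k).card : ℝ) = 2 * k + 1 := by
    rw [Int.card_Icc]
    have : (((k : ℤ) + 1 - -(k : ℤ)).toNat : ℤ) = 2 * k + 1 := by
      rw [Int.toNat_of_nonneg (by omega)]
      ring
    exact_mod_cast this
  rw [Finset.sum_comm, ← nsmul_eq_mul]
  refine Finset.sum_le_card_nsmul _ _ _ fun n₂ _ => ?_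
  calc _ ≤ ∑ n₁ ∈ Finset.Ioc u v, (1 / (2 * (k : ℝ) + 1)) * ∑ l ∈ Finset.Icc (-(k : ℤ)) k,
        Real.exp ((2 * k + 1) * k * dvdWeight w z (n₁ - (n₂ - q * l))) := by
        refine Finset.sum_le_sum fun n₁ _ => ?_
        have h := exp_mul_sum_le _ hne (k : ℝ) (fun l => dvdWeight w z (n₁ - n₂ + q * l))
        rw [hcard] at h
        simpa only [sub_add] using h
    _ = (1 / (2 * (k : ℝ) + 1)) * ∑ l ∈ Finset.Icc (-(k : ℤ)) k, ∑ n₁ ∈ Finset.Ioc u v,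
        Real.exp ((2 * k + 1) * k * dvdWeight w z (n₁ - (n₂ - q * l))) := by
        rw [← Finset.mul_sum, Finset.sum_comm]
    _ ≤ (1 / (2 * (k : ℝ) + 1)) * ((Finset.Icc (-(k : ℤ)) k).card • R) := by
        refine mul_le_mul_of_nonneg_left ?_ (by positivity)
        refine Finset.sum_le_card_nsmul _ _ _ fun l _ => ?_
        exact sum_exp_mul_dvdWeight_le hw (by positivity) u v _
    _ = R := by
        rw [nsmul_eq_mul, hcard]
        field_simp

/-- The variance bound for the sums of the weights over an interval. -/
theorem variance_sum_lam_le {M z : ℝ} {K : ℕ} {H : ℝ} (q : ℕ) (u v : ℤ)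
    (hw : 0 < H ^ M) (hwz : H ^ M ≤ z) (hk : (⌊(K : ℝ) * H⌋₊ : ℝ) ≤ H ^ M)
    (hq : ∀ p ∈ primesBetween (H ^ M) z, ¬ p ∣ q) (k : ℕ) (hkdef : k = ⌊(K : ℝ) * H⌋₊)
    (N : ℝ) (hN : N = (Finset.Ioc u v).card) :
    ∑ b ∈ Finset.range (PP z), (∑ n ∈ Finset.Ioc u v, lam M z K b H q n - N) ^ 2 ≤
      (PP z : ℝ) * (Real.exp (8 * k / H ^ M) * (N * (N *
        Real.exp ((2 * k + 1) * k * Real.exp ((2 * k + 1) * k / H ^ M) * (2 / H ^ M)) +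
        Real.exp ((2 * k + 1) * k * Real.exp ((2 * k + 1) * k / H ^ M) *
          ∑ p ∈ primesBetween (H ^ M) z, 1 / (p : ℝ)))) - N ^ 2 + 4 * N ^ 2 * k ^ 2 / H ^ M) := by
  have hN0 : 0 ≤ N := by rw [hN]; positivity
  have hsq : ∑ b ∈ Finset.range (PP z), (∑ n ∈ Finset.Ioc u v, lam M z K b H q n) ^ 2 ≤
      (PP z : ℝ) * (Real.exp (8 * k / H ^ M) * (N * (N *
        Real.exp ((2 * k + 1) * k * Real.exp ((2 * k + 1) * k / H ^ M) * (2 / H ^ M)) +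
        Real.exp ((2 * k + 1) * k * Real.exp ((2 * k + 1) * k / H ^ M) *
          ∑ p ∈ primesBetween (H ^ M) z, 1 / (p : ℝ))))) := by
    calc _ = ∑ n₁ ∈ Finset.Ioc u v, ∑ n₂ ∈ Finset.Ioc u v,
          ∑ b ∈ Finset.range (PP z), lam M z K b H q n₁ * lam M z K b H q n₂ := by
          simp_rw [sq, Finset.sum_mul_sum]
          rw [Finset.sum_comm]
          exact Finset.sum_congr rfl fun _ _ => Finset.sum_comm
      _ ≤ ∑ n₁ ∈ Finset.Ioc u v, ∑ n₂ ∈ Finset.Ioc u v, ((PP z : ℝ) * Real.exp (8 * k / H ^ M)) *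
          Real.exp ((k : ℝ) * ∑ l ∈ Finset.Icc (-(k : ℤ)) k,
            dvdWeight (H ^ M) z (n₁ - n₂ + q * l)) := by
          refine Finset.sum_le_sum fun n₁ _ => Finset.sum_le_sum fun n₂ _ => ?_
          rw [mul_assoc, ← Real.exp_add, hkdef]
          exact sum_lam_mul_le q n₁ n₂ hw hwz hk hq
      _ ≤ _ := by
          simp_rw [← Finset.mul_sum]
          rw [mul_assoc, hN]
          gcongr
          exact sum_sum_exp_dvdWeight_le hw k q u v
  have hlin : (PP z : ℝ) * (N * (1 - 2 * k ^ 2 / H ^ M)) ≤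
      ∑ b ∈ Finset.range (PP z), ∑ n ∈ Finset.Ioc u v, lam M z K b H q n := by
    rw [Finset.sum_comm]
    calc _ = ∑ _n ∈ Finset.Ioc u v, (PP z : ℝ) * (1 - 2 * k ^ 2 / H ^ M) := by
          rw [Finset.sum_const, nsmul_eq_mul, ← hN]
          ring
      _ ≤ _ := by
          refine Finset.sum_le_sum fun n _ => ?_
          rw [hkdef]
          exact le_sum_lam q n hw hwz hk
  calc _ = ∑ b ∈ Finset.range (PP z), (∑ n ∈ Finset.Ioc u v, lam M z K b H q n) ^ 2 -
        2 * N * (∑ b ∈ Finset.range (PP z), ∑ n ∈ Finset.Ioc u v, lam M z K b H q n) +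
        PP z * N ^ 2 := by
        rw [Finset.mul_sum, ← Finset.sum_sub_distrib]
        have : (PP z : ℝ) * N ^ 2 = ∑ _b ∈ Finset.range (PP z), N ^ 2 := by simp
        rw [this, ← Finset.sum_add_distrib]
        refine Finset.sum_congr rfl fun b _ => ?_
        ring
    _ ≤ _ := by
        have := mul_le_mul_of_nonneg_left hlin (by positivity : 0 ≤ 2 * N)
        refine (add_le_add_left (sub_le_sub hsq this) _).trans (le_of_eq ?_)
        ring

theorem variance_sum_lam_le_of_large (K : ℕ) (hK : 1 ≤ K) :
    ∃ c C : ℝ, 0 < c ∧ 0 < C ∧ ∀ (M z H : ℝ) (q : ℕ) (u v : ℤ), 2 ≤ M → K ≤ H → H ^ M ≤ z →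
      (∀ p ∈ primesBetween (H ^ M) z, ¬ p ∣ q) →
      Real.exp (c * H ^ 2 * ∑ p ∈ primesBetween (H ^ M) z, 1 / (p : ℝ)) ≤
        (Finset.Ioc u v).card * H ^ (2 - M) →
      ∑ b ∈ Finset.range (PP z),
          (∑ n ∈ Finset.Ioc u v, lam M z K b H q n - (Finset.Ioc u v).card) ^ 2 ≤
        (PP z : ℝ) * (C * ((Finset.Ioc u v).card : ℝ) ^ 2 * H ^ (2 - M)) := by
  set c : ℝ := 3 * K ^ 2 * Real.exp (3 * K ^ 2) with hc
  set D : ℝ := 8 * K + 2 * c with hD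
  clear_value D
  have hK0 : (1 : ℝ) ≤ K := by exact_mod_cast hK
  have hc0 : 0 < c := by positivity
  clear_value c
  have hD0 : 0 < D := by rw [hD]; positivity
  refine ⟨c, D * Real.exp D + Real.exp (8 * K) + 4 * K ^ 2, hc0, by positivity, ?_⟩
  intro M z H q u v hM hKH hwz hq hS
  have hH1 : 1 ≤ H := hK0.trans hKH
  have hH0 : 0 < H := by linarith
  have hw : 0 < H ^ M := Real.rpow_pos_of_pos hH0 M
  have hη : H ^ (2 - M) = H ^ 2 / H ^ M := by
    rw [Real.rpow_sub hH0, Real.rpow_two]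
  have hη0 : 0 < H ^ (2 - M) := Real.rpow_pos_of_pos hH0 _
  have hη1 : H ^ (2 - M) ≤ 1 := Real.rpow_le_one_of_one_le_of_nonpos hH1 (by linarith)
  set η := H ^ (2 - M) with hηdef
  set k := ⌊(K : ℝ) * H⌋₊ with hkdef
  set N : ℝ := ((Finset.Ioc u v).card : ℝ) with hN
  have hN0 : 0 ≤ N := by positivity
  have hk1 : (k : ℝ) ≤ K * H := Nat.floor_le (by positivity)
  clear_value N η k
  have hwη : H ^ 2 = η * H ^ M := by rw [hη]; field_simp
  have hk : (k : ℝ) ≤ H ^ M := by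
    nlinarith
  have hB : (2 * (k : ℝ) + 1) * k ≤ 3 * K ^ 2 * H ^ 2 := by
    have h1 : (2 * (k : ℝ) + 1) * k ≤ 3 * (k : ℝ) ^ 2 := by
      rcases Nat.eq_zero_or_pos k with h | h
      · rw [h]; simp
      · have : (1 : ℝ) ≤ k := by exact_mod_cast h
        nlinarith
    have h2 : (k : ℝ) ^ 2 ≤ (K * H) ^ 2 := by gcongr
    nlinarith
  have hBw : (2 * (k : ℝ) + 1) * k / H ^ M ≤ 3 * K ^ 2 := by
    rw [div_le_iff₀ hw]
    calc _ ≤ _ := hB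
      _ = 3 * K ^ 2 * (η * H ^ M) := by rw [hwη]
      _ ≤ 3 * K ^ 2 * (1 * H ^ M) := by gcongr
      _ = _ := by ring
  have hA : (2 * (k : ℝ) + 1) * k * Real.exp ((2 * (k : ℝ) + 1) * k / H ^ M) ≤ c * H ^ 2 := by
    calc _ ≤ 3 * K ^ 2 * H ^ 2 * Real.exp (3 * K ^ 2) := by gcongr
      _ = _ := by rw [hc]; ring
  have hA2 : (2 * (k : ℝ) + 1) * k * Real.exp ((2 * (k : ℝ) + 1) * k / H ^ M) * (2 / H ^ M) ≤
      2 * c * η := by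
    calc _ ≤ c * H ^ 2 * (2 / H ^ M) := by gcongr
      _ = _ := by rw [hη]; ring
  have h8 : 8 * (k : ℝ) / H ^ M ≤ 8 * K * η := by
    rw [div_le_iff₀ hw, mul_assoc, ← hwη]
    nlinarith
  have h8' : 8 * (k : ℝ) / H ^ M ≤ 8 * K := h8.trans (by nlinarith)
  have hkk : 4 * N ^ 2 * (k : ℝ) ^ 2 / H ^ M ≤ 4 * K ^ 2 * N ^ 2 * η := by
    rw [div_le_iff₀ hw, mul_assoc _ η, ← hwη]
    have h2 : (k : ℝ) ^ 2 ≤ (K * H) ^ 2 := by gcongr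
    calc 4 * N ^ 2 * (k : ℝ) ^ 2 ≤ 4 * N ^ 2 * (K * H) ^ 2 := by gcongr
      _ = _ := by ring
  have hE : Real.exp (D * η) ≤ 1 + D * Real.exp D * η := by
    have h3 := mul_le_mul_of_nonneg_right (Real.one_sub_le_exp_neg (D * η))
      (Real.exp_pos (D * η)).le
    rw [← Real.exp_add, neg_add_cancel, Real.exp_zero] at h3
    have h4 : Real.exp (D * η) ≤ Real.exp D := by
      rw [Real.exp_le_exp]
      nlinarith
    have h5 : D * η * Real.exp (D * η) ≤ D * η * Real.exp D := by gcongr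
    linarith
  refine (variance_sum_lam_le q u v hw hwz (hkdef ▸ hk) hq k hkdef N hN).trans ?_
  refine mul_le_mul_of_nonneg_left ?_ (by positivity)
  have hS' : Real.exp ((2 * (k : ℝ) + 1) * k * Real.exp ((2 * (k : ℝ) + 1) * k / H ^ M) *
      ∑ p ∈ primesBetween (H ^ M) z, 1 / (p : ℝ)) ≤ N * η := by
    refine le_trans ?_ hS
    rw [Real.exp_le_exp]
    exact mul_le_mul_of_nonneg_right hA (Finset.sum_nonneg fun _ _ => by positivity)
  calc _ ≤ Real.exp (8 * k / H ^ M) * (N * (N * Real.exp (2 * c * η) + N * η)) - N ^ 2 +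
        4 * K ^ 2 * N ^ 2 * η := by gcongr
    _ = N ^ 2 * (Real.exp (8 * k / H ^ M) * Real.exp (2 * c * η)) +
        Real.exp (8 * k / H ^ M) * (N ^ 2 * η) - N ^ 2 + 4 * K ^ 2 * N ^ 2 * η := by ring
    _ ≤ N ^ 2 * (Real.exp (8 * K * η) * Real.exp (2 * c * η)) +
        Real.exp (8 * K) * (N ^ 2 * η) - N ^ 2 + 4 * K ^ 2 * N ^ 2 * η := by gcongr
    _ = N ^ 2 * Real.exp (D * η) +
        Real.exp (8 * K) * (N ^ 2 * η) - N ^ 2 + 4 * K ^ 2 * N ^ 2 * η := by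
        rw [← Real.exp_add, hD]
        ring_nf
    _ ≤ N ^ 2 * (1 + D * Real.exp D * η) +
        Real.exp (8 * K) * (N ^ 2 * η) - N ^ 2 + 4 * K ^ 2 * N ^ 2 * η := by gcongr
    _ = _ := by ring

open Filter Topology in
theorem eventually_parameters (δ ξ M c κ : ℝ) (hδ0 : 0 < δ) (hδ1 : δ < 1 / 2) (hξ : 1 < ξ)
    (hM : 2 ≤ M) (hc : 0 < c) :
    ∀ᶠ x : ℝ in atTop, ∀ H ∈ frakH1 δ ξ x,
      κ ≤ H ∧ 1 ≤ H ∧ 0 < (yy δ x : ℝ) ∧ H ^ M ≤ zz δ x ∧ zz δ x ≤ yy δ x / (ξ * H) ∧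
      Real.exp (c * H ^ 2 * ∑ p ∈ primesBetween (H ^ M) (zz δ x), 1 / (p : ℝ)) ≤
        yy δ x * H ^ (2 - M) := by
  have hlog := Real.tendsto_log_atTop
  have hloglog := hlog.comp hlog
  have hpow := (tendsto_rpow_atTop hδ0).comp hlog
  have hexp : ∀ᶠ L : ℝ in atTop, L ^ (M + 1) ≤ Real.exp (L / 2) := by
    have h := (isLittleO_rpow_exp_pos_mul_atTop (M + 1)
      (by norm_num : (0 : ℝ) < 1 / 2)).bound one_pos
    filter_upwards [h, eventually_ge_atTop 0] with L hL hL0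
    rw [one_mul, Real.norm_of_nonneg (Real.rpow_nonneg hL0 _),
      Real.norm_of_nonneg (Real.exp_pos _).le] at hL
    exact hL.trans (le_of_eq (by ring_nf))
  filter_upwards [hlog.eventually_ge_atTop 1, hloglog.eventually_ge_atTop (max 1 (80 * c)),
    hpow.eventually_ge_atTop (max 1 κ), hlog.eventually hexp, eventually_gt_atTop 0]
    with x hL hLL hLδ hLexp hx
  rintro H ⟨j, -, rfl, hlow, hup⟩
  generalize ξ ^ j = H at hlow hup ⊢
  simp only [Function.comp_apply] at hLL hLδ
  have hL2 : zz δ x = yy δ x * Real.log (Real.log x) ^ 2 / Real.log x ^ (1 / 2 : ℝ) := rfl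
  set L := Real.log x with hLdef
  set G := Real.log L with hG
  set Y : ℝ := (yy δ x : ℝ) with hY
  set Z := zz δ x with hZ
  have hG1 : 1 ≤ G := (le_max_left _ _).trans hLL
  have hGc : 80 * c ≤ G := (le_max_right _ _).trans hLL
  have hL0 : 0 < L := by linarith
  have hGL : G ≤ L := (Real.log_le_sub_one_of_pos hL0).trans (by linarith)
  have hxe : Real.exp L = x := Real.exp_log hx
  have hx1 : 1 ≤ x := by
    rw [← hxe]
    exact Real.one_le_exp hL0.le
  have hLδ1 : 1 ≤ L ^ δ := (le_max_left _ _).trans hLδ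
  have hYge : x * L ^ δ ≤ Y := Nat.le_ceil _
  have hYx : x ≤ Y := le_trans (by nlinarith) hYge
  have hY0 : 0 < Y := by linarith
  have hYle : Y ≤ 2 * x * L := by
    have h1 : Y ≤ x * L ^ δ + 1 := (Nat.ceil_lt_add_one (by positivity)).le
    have h2 : L ^ δ ≤ L := by
      calc L ^ δ ≤ L ^ (1 : ℝ) := Real.rpow_le_rpow_of_exponent_le hL (by linarith)
        _ = L := Real.rpow_one L
    nlinarith
  clear_value Y Z G L
  set r := L ^ (1 / 2 : ℝ) with hr
  have hr2 : r * r = L := by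
    rw [hr, ← Real.rpow_add hL0]
    norm_num
  have hr1 : 1 ≤ r := Real.one_le_rpow hL (by norm_num)
  clear_value r
  have hZ0 : 0 < Z := by rw [hL2]; positivity
  have hHL : 2 * L ^ δ ≤ H := by
    refine le_trans ?_ hlow
    rw [le_div_iff₀ hx]
    linarith
  have hκ : κ ≤ H := by
    have := (le_max_right 1 κ).trans hLδ
    linarith
  have hH1 : 1 ≤ H := by linarith
  have hH0 : 0 < H := by linarith
  have hξ0 : 0 < ξ := by linarith
  have hHr : H * G ^ 2 ≤ r := by
    have h1 : Y / (ξ * Z) = r / (ξ * G ^ 2) := by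
      rw [hL2]
      field_simp
    rw [h1, le_div_iff₀ (by positivity)] at hup
    have h2 : H * G ^ 2 * 1 ≤ H * G ^ 2 * ξ := by gcongr
    linarith
  have hH2 : H ^ 2 * G ^ 4 ≤ L := by
    have h0 : 0 ≤ H * G ^ 2 := by positivity
    have : (H * G ^ 2) * (H * G ^ 2) ≤ r * r := mul_le_mul hHr hHr h0 (by linarith)
    rw [hr2] at this
    linarith
  have hHleL : H ≤ L := by
    have h1 : (1 : ℝ) ≤ G ^ 4 := one_le_pow₀ hG1
    nlinarith
  have hexp2 : Real.exp (L / 2) * Real.exp (L / 2) = x := by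
    rw [← Real.exp_add, add_halves, hxe]
  have hLM : L ^ (M + 1) = L ^ M * L := by
    rw [Real.rpow_add hL0, Real.rpow_one]
  have hE1 : 1 ≤ Real.exp (L / 2) := Real.one_le_exp (by positivity)
  refine ⟨hκ, hH1, hY0, ?_, ?_, ?_⟩
  · have h1 : H ^ M ≤ L ^ M := Real.rpow_le_rpow hH0.le hHleL (by linarith)
    have h2 : H ^ M * r ≤ Y * G ^ 2 := by
      calc H ^ M * r ≤ L ^ M * L := by
            refine mul_le_mul h1 ?_ (by linarith) (by positivity)
            exact hr2 ▸ le_mul_of_one_le_left (by linarith) hr1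
        _ ≤ Real.exp (L / 2) := by rw [← hLM]; exact hLexp
        _ ≤ x := hexp2 ▸ le_mul_of_one_le_left (by positivity) hE1
        _ ≤ Y := hYx
        _ ≤ Y * G ^ 2 := le_mul_of_one_le_right hY0.le (one_le_pow₀ hG1)
    rw [hL2, le_div_iff₀ (by linarith)]
    exact h2
  · rw [le_div_iff₀ (by positivity)] at hup ⊢
    linarith
  · have hZle : Real.log Z ≤ 5 * L := by
      have h1 : Z ≤ 2 * x * L * L ^ 2 := by
        rw [hL2]
        calc Y * G ^ 2 / r ≤ Y * G ^ 2 := div_le_self (by positivity) hr1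
          _ ≤ 2 * x * L * L ^ 2 := by gcongr
      refine (Real.log_le_log hZ0 h1).trans ?_
      have h2 : 2 * x * L * L ^ 2 = (2 * x) * L ^ 3 := by ring
      rw [h2, Real.log_mul (by positivity) (by positivity), Real.log_mul (by norm_num) hx.ne',
        Real.log_pow, ← hLdef, ← hG]
      have := Real.log_two_lt_d9
      push_cast
      linarith
    have hS := sum_inv_primesUpTo_le (by linarith : 1 ≤ 5 * L) hZle hZ0
    have hsub : ∑ p ∈ primesBetween (H ^ M) Z, 1 / (p : ℝ) ≤
        ∑ p ∈ primesUpTo Z, 1 / (p : ℝ) := by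
      refine Finset.sum_le_sum_of_subset_of_nonneg ?_ fun _ _ _ => by positivity
      intro p hp
      obtain ⟨h0, -, h1⟩ := mem_primesBetween.1 hp
      exact mem_primesUpTo.2 ⟨h0, h1⟩
    have hlog15 : Real.log (3 * (5 * L)) ≤ 4 * G := by
      have h1 : Real.log 15 ≤ 3 := by
        rw [Real.log_le_iff_le_exp (by norm_num), show (3 : ℝ) = 1 + 1 + 1 by norm_num,
          Real.exp_add, Real.exp_add]
        have := Real.exp_one_gt_d9
        have h3 : (2.7 : ℝ) * 2.7 * 2.7 ≤ Real.exp 1 * Real.exp 1 * Real.exp 1 := by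
          gcongr <;> linarith
        linarith
      rw [show 3 * (5 * L) = 15 * L by ring, Real.log_mul (by norm_num) hL0.ne', ← hG]
      linarith
    have hS2 : ∑ p ∈ primesBetween (H ^ M) Z, 1 / (p : ℝ) ≤ 40 * G := by linarith
    have hmain : c * H ^ 2 * ∑ p ∈ primesBetween (H ^ M) Z, 1 / (p : ℝ) ≤ L / 2 := by
      calc _ ≤ c * H ^ 2 * (40 * G) := by gcongr
        _ = (80 * c) * (H ^ 2 * G) / 2 := by ring
        _ ≤ G * (H ^ 2 * G) / 2 := by gcongr
        _ = H ^ 2 * G ^ 2 / 2 := by ring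
        _ ≤ H ^ 2 * G ^ 4 / 2 := by
            gcongr
            norm_num
        _ ≤ L / 2 := by gcongr
    have hHM : H ^ (M - 2) ≤ Real.exp (L / 2) := by
      calc H ^ (M - 2) ≤ L ^ (M - 2) := Real.rpow_le_rpow hH0.le hHleL (by linarith)
        _ ≤ L ^ (M + 1) := Real.rpow_le_rpow_of_exponent_le hL (by linarith)
        _ ≤ _ := hLexp
    have hinv : H ^ (2 - M) = (H ^ (M - 2))⁻¹ := by
      rw [← Real.rpow_neg hH0.le]
      ring_nf
    rw [hinv, ← div_eq_mul_inv, le_div_iff₀ (Real.rpow_pos_of_pos hH0 _)]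
    calc _ ≤ Real.exp (L / 2) * Real.exp (L / 2) :=
          mul_le_mul (Real.exp_le_exp.2 hmain) hHM (by positivity) (by positivity)
      _ = x := hexp2
      _ ≤ Y := hYx

/-- On the event `τ < |X - μ|` the value `X` is controlled by the squared deviation. -/
theorem le_sq_deviation {X μ τ : ℝ} (hμ : 0 ≤ μ) (hτ : 0 < τ) (h : τ < |X - μ|) :
    X ≤ (μ / τ ^ 2 + 1 / τ) * (X - μ) ^ 2 := by
  have h1 : X ≤ μ + |X - μ| := by linarith [le_abs_self (X - μ)]
  have h2 : 1 ≤ (X - μ) ^ 2 / τ ^ 2 := by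
    rw [one_le_div (by positivity), ← sq_abs (X - μ)]
    gcongr
  have h3 : |X - μ| ≤ (X - μ) ^ 2 / τ := by
    rw [le_div_iff₀ hτ, ← sq_abs (X - μ), sq]
    gcongr
  calc X ≤ μ * 1 + |X - μ| := by linarith
    _ ≤ μ * ((X - μ) ^ 2 / τ ^ 2) + (X - μ) ^ 2 / τ := by gcongr
    _ = _ := by ring

theorem sum_lam_translate_le {M z : ℝ} {K : ℕ} {H : ℝ} (hH : 0 < H) (b : ℤ) (Y q h : ℕ)
    (hq : (q : ℝ) ≤ Y / H) (hh : h ≤ ⌊(K : ℝ) * H⌋₊) (P : ℤ → Prop) :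
    ∑ n ∈ (Finset.Icc (1 : ℤ) Y).filter P, lam M z K b H q (n - (q : ℤ) * (h : ℤ)) ≤
      ∑ n ∈ Finset.Ioc (-((K * Y : ℕ) : ℤ)) Y, lam M z K b H q n := by
  have hqh : q * h ≤ K * Y := by
    have h1 : (h : ℝ) ≤ K * H := (Nat.cast_le.2 hh).trans (Nat.floor_le (by positivity))
    have h2 : (q : ℝ) * h ≤ (Y / H) * (K * H) := by gcongr
    have h3 : ((Y : ℝ) / H) * (K * H) = K * Y := by field_simp
    rw [h3] at h2
    exact_mod_cast h2
  have hqh' : (q : ℤ) * h ≤ ((K * Y : ℕ) : ℤ) := by exact_mod_cast hqh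
  have hqh0 : (0 : ℤ) ≤ (q : ℤ) * h := by positivity
  rw [← Finset.sum_image (f := fun n => lam M z K b H q n)
    (g := fun n : ℤ => n - (q : ℤ) * (h : ℤ)) (fun _ _ _ _ h => by simpa using h)]
  refine Finset.sum_le_sum_of_subset_of_nonneg ?_ fun n _ _ => lam_nonneg _ _ _ _ _ _ _
  intro m hm
  rw [Finset.mem_image] at hm
  obtain ⟨n, hn, rfl⟩ := hm
  have hn' := Finset.mem_Icc.1 (Finset.mem_filter.1 hn).1
  rw [Finset.mem_Ioc]
  constructor <;> linarith

theorem sum_bad_le {δ ξ x M z : ℝ} {K : ℕ} {H ε : ℝ} (hε : 0 < ε) (hH : 1 ≤ H)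
    (hY : 0 < (yy δ x : ℝ)) (b : ℤ) (P : ℤ → Prop) :
    ∑ n ∈ (Finset.Icc (1 : ℤ) (yy δ x : ℤ)).filter P,
      ∑ q ∈ (QH δ ξ x H).filter (fun q =>
          (yy δ x : ℝ) / H ^ (1 + ε) <
            |(∑ n' ∈ Finset.Ioc (-((K * yy δ x : ℕ) : ℤ)) ((yy δ x : ℤ)),
                lam M z K b H q n') - ((K : ℝ) + 1) * (yy δ x : ℝ)|),
        ∑ h ∈ Finset.Icc 1 ⌊(K : ℝ) * H⌋₊, lam M z K b H q (n - (q : ℤ) * (h : ℤ)) ≤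
    K * H * ((K + 2) * H ^ (2 + 2 * ε) / yy δ x) * ∑ q ∈ QH δ ξ x H,
      (∑ n' ∈ Finset.Ioc (-((K * yy δ x : ℕ) : ℤ)) ((yy δ x : ℤ)),
        lam M z K b H q n' - ((K : ℝ) + 1) * (yy δ x : ℝ)) ^ 2 := by
  have hH0 : 0 < H := by linarith
  rw [Finset.sum_comm, Finset.mul_sum]
  refine (Finset.sum_le_sum fun q hq => ?_).trans
    (Finset.sum_le_sum_of_subset_of_nonneg (Finset.filter_subset _ _) fun _ _ _ => by positivity)
  rw [Finset.mem_filter] at hq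
  obtain ⟨hqQ, hbad⟩ := hq
  have hqle : (q : ℝ) ≤ yy δ x / H := (Finset.mem_filter.1 hqQ).2.2.2
  set X := ∑ n' ∈ Finset.Ioc (-((K * yy δ x : ℕ) : ℤ)) ((yy δ x : ℤ)), lam M z K b H q n' with hX
  have hX0 : 0 ≤ X := Finset.sum_nonneg fun _ _ => lam_nonneg _ _ _ _ _ _ _
  have h1 : ∑ n ∈ (Finset.Icc (1 : ℤ) (yy δ x : ℤ)).filter P,
      ∑ h ∈ Finset.Icc 1 ⌊(K : ℝ) * H⌋₊, lam M z K b H q (n - (q : ℤ) * (h : ℤ)) ≤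
      K * H * X := by
    rw [Finset.sum_comm]
    calc _ ≤ (Finset.Icc 1 ⌊(K : ℝ) * H⌋₊).card • X := by
          refine Finset.sum_le_card_nsmul _ _ _ fun h hh => ?_
          exact sum_lam_translate_le hH0 b (yy δ x) q h hqle (Finset.mem_Icc.1 hh).2 P
      _ = (⌊(K : ℝ) * H⌋₊ : ℝ) * X := by simp
      _ ≤ K * H * X := by
          gcongr
          exact Nat.floor_le (by positivity)
  refine h1.trans ?_
  rw [mul_assoc (K * H : ℝ)]
  refine mul_le_mul_of_nonneg_left ?_ (by positivity)
  have hp0 : 0 < H ^ (1 + ε) := Real.rpow_pos_of_pos hH0 _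
  refine (le_sq_deviation (by positivity) (by positivity) hbad).trans ?_
  refine mul_le_mul_of_nonneg_right ?_ (sq_nonneg _)
  have hsq : H ^ (2 + 2 * ε) = (H ^ (1 + ε)) ^ 2 := by
    rw [← Real.rpow_natCast, ← Real.rpow_mul hH0.le]
    congr 1
    push_cast
    ring
  have hp1 : 1 ≤ H ^ (1 + ε) := Real.one_le_rpow hH (by linarith)
  have h2 : ((K : ℝ) + 1) * yy δ x / (yy δ x / H ^ (1 + ε)) ^ 2 + 1 / (yy δ x / H ^ (1 + ε)) =
      ((K + 1) * (H ^ (1 + ε)) ^ 2 + H ^ (1 + ε)) / yy δ x := by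
    field_simp
  rw [h2, hsq]
  gcongr
  nlinarith

theorem stmt16 (δ M : ℝ) (K : ℕ) (ξ ε : ℝ)
    (hδ0 : 0 < δ) (hδ1 : δ < 1/2) (hK : 2 ≤ K) (hξ : 1 < ξ) (hM : 2 ≤ M) (hε : 0 < ε) :
    ∃ C : ℝ, 0 < C ∧ ∃ x₀ : ℝ, ∀ x ≥ x₀, ∀ H ∈ frakH1 δ ξ x,
      EE δ x (fun b =>
        ∑ n ∈ (Finset.Icc (1 : ℤ) (yy δ x : ℤ)).filter (inS (zz δ x) b),
          ∑ q ∈ (QH δ ξ x H).filter (fun q =>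
              (yy δ x : ℝ) / H ^ (1 + ε) <
                |(∑ n' ∈ Finset.Ioc (-((K * yy δ x : ℕ) : ℤ)) ((yy δ x : ℤ)),
                    lam M (zz δ x) K b H q n') - ((K : ℝ) + 1) * (yy δ x : ℝ)|),
            ∑ h ∈ Finset.Icc 1 ⌊(K : ℝ) * H⌋₊,
              lam M (zz δ x) K b H q (n - (q : ℤ) * (h : ℤ))) ≤
        C * (yy δ x : ℝ) * ((QH δ ξ x H).card : ℝ) / H ^ (M - 5 - 2 * ε) := by
  obtain ⟨c, C, hc, hC, hvar⟩ := variance_sum_lam_le_of_large K (by omega)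
  have hev := eventually_parameters δ ξ M c K hδ0 hδ1 hξ hM hc
  obtain ⟨x₀, hx₀⟩ := Filter.eventually_atTop.1 hev
  have hK0 : (0 : ℝ) < K := by exact_mod_cast (by omega : 0 < K)
  refine ⟨K * (K + 2) * (C * (K + 1) ^ 2), by positivity, x₀, fun x hx H hH => ?_⟩
  obtain ⟨hKH, hH1, hY, hwz, hzq, hexp⟩ := hx₀ x hx H hH
  have hH0 : 0 < H := by linarith
  have hcard : ((Finset.Ioc (-((K * yy δ x : ℕ) : ℤ)) ((yy δ x : ℤ))).card : ℝ) =
      ((K : ℝ) + 1) * yy δ x := by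
    rw [Int.card_Ioc]
    have h : (((yy δ x : ℤ) - -((K * yy δ x : ℕ) : ℤ)).toNat : ℤ) = ((K : ℤ) + 1) * yy δ x := by
      rw [Int.toNat_of_nonneg (by rw [sub_neg_eq_add]; positivity)]
      push_cast
      ring
    exact_mod_cast h
  have hη0 : 0 < H ^ (2 - M) := Real.rpow_pos_of_pos hH0 _
  have hq : ∀ q ∈ QH δ ξ x H,
      ∑ b ∈ Finset.range (PP (zz δ x)),
        (∑ n' ∈ Finset.Ioc (-((K * yy δ x : ℕ) : ℤ)) ((yy δ x : ℤ)),
          lam M (zz δ x) K b H q n' - ((K : ℝ) + 1) * (yy δ x : ℝ)) ^ 2 ≤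
      (PP (zz δ x) : ℝ) * (C * (((K : ℝ) + 1) * yy δ x) ^ 2 * H ^ (2 - M)) := by
    intro q hqQ
    obtain ⟨-, hqp, hq1, -⟩ := Finset.mem_filter.1 hqQ
    have h := hvar M (zz δ x) H q (-((K * yy δ x : ℕ) : ℤ)) (yy δ x) hM hKH hwz ?_ ?_
    · rw [hcard] at h
      exact h
    · intro p hp hpq
      obtain ⟨h0, -, h2⟩ := mem_primesBetween.1 hp
      rw [(Nat.prime_dvd_prime_iff_eq h0 hqp).1 hpq] at h2
      linarith
    · refine hexp.trans ?_
      rw [hcard]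
      gcongr
      nlinarith
  have hP : (0 : ℝ) < PP (zz δ x) := by exact_mod_cast PP_pos _
  have hpow : H * H ^ (2 + 2 * ε) * H ^ (2 - M) = 1 / H ^ (M - 5 - 2 * ε) := by
    rw [one_div, ← Real.rpow_neg hH0.le]
    nth_rewrite 1 [← Real.rpow_one H]
    rw [← Real.rpow_add hH0, ← Real.rpow_add hH0]
    congr 1
    ring
  unfold EE
  calc _ ≤ (1 / (PP (zz δ x) : ℝ)) * ∑ b ∈ Finset.range (PP (zz δ x)),
        K * H * ((K + 2) * H ^ (2 + 2 * ε) / yy δ x) * ∑ q ∈ QH δ ξ x H,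
          (∑ n' ∈ Finset.Ioc (-((K * yy δ x : ℕ) : ℤ)) ((yy δ x : ℤ)),
            lam M (zz δ x) K b H q n' - ((K : ℝ) + 1) * (yy δ x : ℝ)) ^ 2 := by
        refine mul_le_mul_of_nonneg_left ?_ (by positivity)
        exact Finset.sum_le_sum fun b _ => sum_bad_le hε hH1 hY b _
    _ ≤ (1 / (PP (zz δ x) : ℝ)) * (K * H * ((K + 2) * H ^ (2 + 2 * ε) / yy δ x) *
        ((QH δ ξ x H).card *
          ((PP (zz δ x) : ℝ) * (C * (((K : ℝ) + 1) * yy δ x) ^ 2 * H ^ (2 - M))))) := by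
        rw [← Finset.mul_sum, Finset.sum_comm]
        refine mul_le_mul_of_nonneg_left ?_ (by positivity)
        refine mul_le_mul_of_nonneg_left ?_ (by positivity)
        rw [← nsmul_eq_mul]
        exact Finset.sum_le_card_nsmul _ _ _ hq
    _ = K * (K + 2) * (C * (K + 1) ^ 2) * yy δ x * (QH δ ξ x H).card *
        (H * H ^ (2 + 2 * ε) * H ^ (2 - M)) := by
        field_simp
    _ = _ := by
        rw [hpow]
        ring
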